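/- For any y₀ ∈ ℝⁿ with Dg(y₀) ≠ 0, one has limsup t̄ₛ(y) = limsup tₛ(y) = t̄ₛ(y₀), where the limsups are taken in the extended reals [0,∞] as y → y₀ restricted to the set {y : g(y) > g(y₀)} (i.e., along the filter of neighborhoods of y₀ intersected with {g > g(y₀)}, which is nontrivial since Dg(y₀) ≠ 0). -/

import Mathlib

open scoped InnerProductSpace Topology ENNReal
open Filter

noncomputable section

/-- Euclidean space `ℝⁿ`. -/
abbrev Euc (n : ℕ) := EuclideanSpace ℝ (Fin n)

/-- Hopf–Lax solution of the Eikonal equation `uₜ + |∇u| = 0` with initial data `g`: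
`u(x,t) = min {g(y) : |y - x| ≤ t}`. -/
def HLu {n : ℕ} (g : Euc n → ℝ) (x : Euc n) (t : ℝ) : ℝ :=
  sInf (g '' Metric.closedBall x t)

/-- The set of minimizers `L(x,t) = {y : |y - x| ≤ t ∧ g y = u(x,t)}`. -/
def HLL {n : ℕ} (g : Euc n → ℝ) (x : Euc n) (t : ℝ) : Set (Euc n) :=
  {y | ‖y - x‖ ≤ t ∧ g y = HLu g x t}

/-- The characteristic from `y₀`: `X(y₀,t) = y₀ + t • Dg(y₀)/|Dg(y₀)|`. -/
def charX {n : ℕ} (Dg : Euc n → Euc n) (y₀ : Euc n) (t : ℝ) : Euc n :=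
  y₀ + t • (‖Dg y₀‖⁻¹ • Dg y₀)

/-- First termination time `t̄ₛ(y₀) = sup {t > 0 : L(X(y₀,t),t) = {y₀}}`, in `[0,∞]`
(`sup ∅ = 0`). -/
def tbar {n : ℕ} (g : Euc n → ℝ) (Dg : Euc n → Euc n) (y₀ : Euc n) : ℝ≥0∞ :=
  sSup (ENNReal.ofReal '' {t : ℝ | 0 < t ∧ HLL g (charX Dg y₀ t) t = {y₀}})

/-- Second termination time `tₛ(y₀) = inf {t > 0 : y₀ ∉ L(X(y₀,t),t)}`, in `[0,∞]`
(`inf ∅ = ∞`). -/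
def tsnd {n : ℕ} (g : Euc n → ℝ) (Dg : Euc n → Euc n) (y₀ : Euc n) : ℝ≥0∞ :=
  sInf (ENNReal.ofReal '' {t : ℝ | 0 < t ∧ y₀ ∉ HLL g (charX Dg y₀ t) t})

/-!
For fixed `y` the balls `closedBall (X(y,t)) t` are internally tangent at `y`: for `s < t` the one
of radius `s` lies, apart from `y`, in the interior of the one of radius `t`.

Upper bound: let `s < T < limsup tₛ` and let `z ≠ y₀` lie in the ball of radius `s` tangent at
`y₀`. Then `z` is interior to the tangent ball of radius `T` at `y₀`, hence also at nearby `y`. For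
such `y` with `g y₀ < g y` and `T < tₛ(y)`, minimality of `y` gives `g y₀ < g y ≤ g z`.

Lower bound: let `L(c,t) = {y₀}` with `c = X(y₀,t)`, and shrink the ball to `closedBall c r` with
`r ↑ t`. Its minimizers `y` converge to `y₀`, so `Dg y ≠ 0`, and the first-order condition forces
`c = X(y,r)`. Thus all of them lie on the sphere of radius `r`, which gives `r ≤ t̄ₛ(y)`, and
`g y₀ < g y` because `y₀` is outside the smaller ball.
-/

section InnerProduct

variable {E : Type*} [NormedAddCommGroup E] [InnerProductSpace ℝ E]

lemma closedBall_add_smul_subset_insert_ball {y v : E} (hv : ‖v‖ = 1) {s t : ℝ} (hst : s < t) :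
    Metric.closedBall (y + s • v) s ⊆ insert y (Metric.ball (y + t • v) t) := by
  intro z hz
  rw [Metric.mem_closedBall] at hz
  have hs : 0 ≤ s := dist_nonneg.trans hz
  have sq_dist (r : ℝ) :
      dist z (y + r • v) ^ 2 = ‖z - y‖ ^ 2 - 2 * r * ⟪z - y, v⟫_ℝ + r ^ 2 := by
    rw [dist_eq_norm, ← sub_sub, norm_sub_sq_real, norm_smul, hv, real_inner_smul_right, mul_one,
      Real.norm_eq_abs, sq_abs, mul_assoc]
  have hsq : ‖z - y‖ ^ 2 ≤ 2 * s * ⟪z - y, v⟫_ℝ := by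
    have := pow_le_pow_left₀ dist_nonneg hz 2
    linarith [sq_dist s]
  refine or_iff_not_imp_left.2 fun hzy => Metric.mem_ball.2 ?_
  have hpos : 0 < ‖z - y‖ ^ 2 := pow_pos (norm_pos_iff.2 (sub_ne_zero.2 hzy)) 2
  have hinner : 0 < ⟪z - y, v⟫_ℝ := by
    by_contra! hle
    linarith [mul_nonpos_of_nonneg_of_nonpos hs hle]
  refine lt_of_pow_lt_pow_left₀ 2 (hs.trans hst.le) ?_
  linarith [sq_dist t, mul_lt_mul_of_pos_right hst hinner]

variable [CompleteSpace E]

lemma inner_gradient_sub_nonneg_of_isMinOn {f : E → ℝ} {v y z : E} {K : Set E} (hK : Convex ℝ K)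
    (hf : HasGradientAt f v y) (hmin : IsMinOn f K y) (hy : y ∈ K) (hz : z ∈ K) :
    0 ≤ ⟪v, z - y⟫_ℝ := by
  simpa only [InnerProductSpace.toDual_apply_apply] using
    hmin.localize.hasFDerivWithinAt_nonneg hf.hasFDerivAt.hasFDerivWithinAt
      (sub_mem_posTangentConeAt_of_segment_subset (hK.segment_subset hy hz))

lemma center_eq_add_smul_gradient_of_isMinOn_closedBall {f : E → ℝ} {v c y : E} {r : ℝ}
    (hf : HasGradientAt f v y) (hv : v ≠ 0) (hy : y ∈ Metric.closedBall c r)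
    (hmin : IsMinOn f (Metric.closedBall c r) y) :
    c = y + r • (‖v‖⁻¹ • v) := by
  have hv' : 0 < ‖v‖ := norm_pos_iff.2 hv
  have hcy : ‖c - y‖ ≤ r := by rwa [← dist_eq_norm, dist_comm]
  have hr : 0 ≤ r := (norm_nonneg _).trans hcy
  have hunit : ‖‖v‖⁻¹ • v‖ = 1 := norm_smul_inv_norm (𝕜 := ℝ) hv
  have hw : c - r • (‖v‖⁻¹ • v) ∈ Metric.closedBall c r := by
    rw [Metric.mem_closedBall, dist_eq_norm, sub_sub_cancel_left, norm_neg, norm_smul, hunit,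
      mul_one, Real.norm_of_nonneg hr]
  have hle : ‖v‖ * r ≤ ⟪v, c - y⟫_ℝ := by
    have := inner_gradient_sub_nonneg_of_isMinOn (convex_closedBall c r) hf hmin hy hw
    rw [sub_right_comm, inner_sub_right, real_inner_smul_right, real_inner_smul_right,
      real_inner_self_eq_norm_sq] at this
    field_simp at this
    linarith
  have hnorm : ‖c - y‖ = r :=
    hcy.antisymm (le_of_mul_le_mul_left (hle.trans (real_inner_le_norm v (c - y))) hv')
  have heq : ⟪v, c - y⟫_ℝ = ‖v‖ * ‖c - y‖ :=
    (real_inner_le_norm v (c - y)).antisymm (hnorm ▸ hle)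
  rw [inner_eq_norm_mul_iff_real, hnorm] at heq
  rw [smul_comm, heq, inv_smul_smul₀ hv'.ne', add_sub_cancel]

end InnerProduct

lemma exists_gt_forall_le_of_isCompact {X β : Type*} [TopologicalSpace X] [LinearOrder β]
    [NoMaxOrder β] {f : X → β} {K : Set X} {a : β} (hf : LowerSemicontinuousOn f K)
    (hK : IsCompact K) (ha : ∀ z ∈ K, a < f z) : ∃ m > a, ∀ z ∈ K, m ≤ f z := by
  rcases K.eq_empty_or_nonempty with rfl | hne
  · obtain ⟨m, hm⟩ := exists_gt a
    exact ⟨m, hm, fun _ hz => hz.elim⟩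
  · obtain ⟨z, hz, hmin⟩ := hf.exists_isMinOn hne hK
    exact ⟨f z, ha z hz, fun _ hw => hmin hw⟩

lemma ofReal_le_of_forall_pos_of_lt {t : ℝ} {a : ℝ≥0∞}
    (h : ∀ s, 0 < s → s < t → ENNReal.ofReal s ≤ a) : ENNReal.ofReal t ≤ a := by
  rcases le_or_gt t 0 with ht | ht
  · exact (ENNReal.ofReal_of_nonpos ht).trans_le zero_le
  · refine le_of_tendsto (ENNReal.continuous_ofReal.continuousWithinAt (s := Set.Iio t)) ?_
    filter_upwards [Ioo_mem_nhdsLT ht] with s hs using h s hs.1 hs.2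

section HopfLax

variable {n : ℕ} {g : Euc n → ℝ} {Dg : Euc n → Euc n} {c x y y₀ z : Euc n} {s t : ℝ}

lemma HLu_le (hg : LowerSemicontinuous g) (hz : z ∈ Metric.closedBall x t) : HLu g x t ≤ g z :=
  csInf_le ((hg.lowerSemicontinuousOn _).bddBelow_of_isCompact (isCompact_closedBall x t))
    (Set.mem_image_of_mem g hz)

lemma mem_HLL_iff (hg : LowerSemicontinuous g) :
    y ∈ HLL g x t ↔ y ∈ Metric.closedBall x t ∧ IsMinOn g (Metric.closedBall x t) y := by
  rw [HLL, Set.mem_ofPred_eq, ← mem_closedBall_iff_norm]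
  refine and_congr_right fun hy => ⟨fun h z hz => h.le.trans (HLu_le hg hz), fun hmin => ?_⟩
  exact ((hmin.isGLB hy).csInf_eq ⟨g y, y, hy, rfl⟩).symm

lemma HLL_eq_singleton_iff (hg : LowerSemicontinuous g) (hy : y ∈ Metric.closedBall x t) :
    HLL g x t = {y} ↔ ∀ z ∈ Metric.closedBall x t, z ≠ y → g y < g z := by
  constructor
  · intro hL z hz hzy
    have hyL : y ∈ HLL g x t := hL ▸ Set.mem_singleton y
    refine (((mem_HLL_iff hg).1 hyL).2 hz).lt_of_ne fun heq => hzy ?_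
    have hzL : z ∈ HLL g x t := ⟨mem_closedBall_iff_norm.1 hz, heq ▸ hyL.2⟩
    rwa [hL] at hzL
  · intro hlt
    have hmin : IsMinOn g (Metric.closedBall x t) y := fun z hz =>
      (eq_or_ne z y).elim (fun h => h ▸ le_refl (g z)) fun h => (hlt z hz h).le
    refine Set.eq_singleton_iff_unique_mem.2 ⟨(mem_HLL_iff hg).2 ⟨hy, hmin⟩, fun z hzL => ?_⟩
    obtain ⟨hz, hzmin⟩ := (mem_HLL_iff hg).1 hzL
    exact by_contra fun hzy => (hlt z hz hzy).not_ge (hzmin hy)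

lemma HLL_nonempty (hg : LowerSemicontinuous g) (ht : 0 ≤ t) : (HLL g x t).Nonempty := by
  obtain ⟨y, hy⟩ := (hg.lowerSemicontinuousOn _).exists_isMinOn (Metric.nonempty_closedBall.2 ht)
    (isCompact_closedBall x t)
  exact ⟨y, (mem_HLL_iff hg).2 hy⟩

lemma eventually_HLu_lt (hg : LowerSemicontinuous g) (hgy : ContinuousAt g y) (ht : 0 < t)
    (hy : y ∈ Metric.closedBall c t) {m : ℝ} (hm : g y < m) :
    ∀ᶠ r in 𝓝[<] t, HLu g c r < m := by
  have hline : Tendsto (fun r => AffineMap.lineMap c y (r / t)) (𝓝 t) (𝓝 y) := by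
    have : Continuous fun r : ℝ => AffineMap.lineMap c y (r / t) := by fun_prop
    simpa [ht.ne'] using this.tendsto t
  filter_upwards [nhdsWithin_le_nhds ((hgy.tendsto.comp hline).eventually_lt_const hm),
    Ioo_mem_nhdsLT ht] with r hr hr0
  refine (HLu_le hg ?_).trans_lt hr
  rw [Metric.mem_closedBall, dist_lineMap_left, Real.norm_of_nonneg (div_nonneg hr0.1.le ht.le)]
  calc r / t * dist c y ≤ r / t * t :=
        mul_le_mul_of_nonneg_left (Metric.mem_closedBall'.1 hy) (div_nonneg hr0.1.le ht.le)
    _ = r := div_mul_cancel₀ r ht.ne'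

lemma eventually_HLL_subset_of_HLL_eq_singleton (hg : LowerSemicontinuous g)
    (hgy : ContinuousAt g y) (ht : 0 < t) (hL : HLL g c t = {y}) {U : Set (Euc n)}
    (hU : U ∈ 𝓝 y) : ∀ᶠ r in 𝓝[<] t, HLL g c r ⊆ U := by
  have hy : y ∈ Metric.closedBall c t :=
    ((mem_HLL_iff hg).1 (hL ▸ Set.mem_singleton y : y ∈ HLL g c t)).1
  obtain ⟨m, hm, hgap⟩ := exists_gt_forall_le_of_isCompact
    (hg.lowerSemicontinuousOn (Metric.closedBall c t \ interior U))
    ((isCompact_closedBall c t).diff isOpen_interior)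
    fun z hz => (HLL_eq_singleton_iff hg hy).1 hL z hz.1 fun h =>
      hz.2 (h ▸ mem_interior_iff_mem_nhds.2 hU)
  filter_upwards [eventually_HLu_lt hg hgy ht hy hm, self_mem_nhdsWithin] with r hr hrt z hz
  by_contra hzU
  have hzt : z ∈ Metric.closedBall c t :=
    Metric.closedBall_subset_closedBall (Set.mem_Iio.1 hrt).le ((mem_HLL_iff hg).1 hz).1
  exact (hgap z ⟨hzt, fun h => hzU (interior_subset h)⟩).not_gt (hz.2 ▸ hr)

lemma dist_charX_charX_le (s t : ℝ) : dist (charX Dg y s) (charX Dg y t) ≤ |s - t| := by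
  rw [charX, charX, dist_add_left, dist_eq_norm, ← sub_smul, norm_smul, Real.norm_eq_abs]
  refine mul_le_of_le_one_right (abs_nonneg _) ?_
  rw [norm_smul, norm_inv, norm_norm]
  exact inv_mul_le_one

lemma self_mem_closedBall_charX (ht : 0 ≤ t) : y ∈ Metric.closedBall (charX Dg y t) t := by
  simpa [charX, abs_of_nonneg ht] using dist_charX_charX_le (Dg := Dg) (y := y) 0 t

lemma closedBall_charX_subset (hst : s ≤ t) :
    Metric.closedBall (charX Dg y s) s ⊆ Metric.closedBall (charX Dg y t) t := by
  refine Metric.closedBall_subset_closedBall' ?_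
  have := dist_charX_charX_le (Dg := Dg) (y := y) s t
  rw [abs_of_nonpos (sub_nonpos.2 hst)] at this
  linarith

lemma mem_ball_charX_of_mem_closedBall (hy : Dg y ≠ 0) (hst : s < t) (hzy : z ≠ y)
    (hz : z ∈ Metric.closedBall (charX Dg y s) s) : z ∈ Metric.ball (charX Dg y t) t :=
  (closedBall_add_smul_subset_insert_ball (norm_smul_inv_norm (𝕜 := ℝ) hy) hst hz).resolve_left hzy

lemma dist_self_charX (hy : Dg y ≠ 0) (ht : 0 ≤ t) : dist y (charX Dg y t) = t := by
  have hunit : ‖‖Dg y‖⁻¹ • Dg y‖ = 1 := norm_smul_inv_norm (𝕜 := ℝ) hy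
  rw [charX, dist_self_add_right, norm_smul, hunit, mul_one, Real.norm_of_nonneg ht]

lemma continuousAt_charX (hDg : ContinuousAt Dg y) (hy : Dg y ≠ 0) (t : ℝ) :
    ContinuousAt (fun x => charX Dg x t) y :=
  continuousAt_id.add <|
    ((hDg.norm.inv₀ (norm_ne_zero_iff.2 hy)).smul hDg).const_smul t

lemma eq_charX_of_mem_HLL (hg : LowerSemicontinuous g) (hgrad : HasGradientAt g (Dg y) y)
    (hy : Dg y ≠ 0) (hL : y ∈ HLL g c t) : c = charX Dg y t :=
  have ⟨hmem, hmin⟩ := (mem_HLL_iff hg).1 hL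
  center_eq_add_smul_gradient_of_isMinOn_closedBall hgrad hy hmem hmin

lemma mem_HLL_charX_of_le (hg : LowerSemicontinuous g) (hs : 0 ≤ s) (hst : s ≤ t)
    (hL : y ∈ HLL g (charX Dg y t) t) : y ∈ HLL g (charX Dg y s) s :=
  (mem_HLL_iff hg).2 ⟨self_mem_closedBall_charX hs,
    ((mem_HLL_iff hg).1 hL).2.on_subset (closedBall_charX_subset hst)⟩

lemma ofReal_le_tbar_of_HLL_eq_singleton (ht : 0 < t) (hL : HLL g (charX Dg y t) t = {y}) :
    ENNReal.ofReal t ≤ tbar g Dg y :=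
  le_sSup (Set.mem_image_of_mem _ ⟨ht, hL⟩)

lemma mem_HLL_charX_of_lt_tsnd (ht : 0 < t) (h : ENNReal.ofReal t < tsnd g Dg y) :
    y ∈ HLL g (charX Dg y t) t :=
  by_contra fun hL => h.not_ge (sInf_le (Set.mem_image_of_mem _ ⟨ht, hL⟩))

lemma tbar_le_tsnd (hg : LowerSemicontinuous g) (y : Euc n) : tbar g Dg y ≤ tsnd g Dg y := by
  refine sSup_le ?_
  rintro _ ⟨t, ⟨-, htL⟩, rfl⟩
  refine le_sInf ?_
  rintro _ ⟨s, ⟨hs, hsL⟩, rfl⟩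
  refine ENNReal.ofReal_le_ofReal (le_of_not_gt fun hst => hsL ?_)
  exact mem_HLL_charX_of_le hg hs.le hst.le (htL ▸ Set.mem_singleton y)

lemma ofReal_le_tbar_of_HLL_subset_sphere (hg : LowerSemicontinuous g) (hy : Dg y ≠ 0)
    (hL : y ∈ HLL g (charX Dg y t) t)
    (hsphere : HLL g (charX Dg y t) t ⊆ Metric.sphere (charX Dg y t) t) :
    ENNReal.ofReal t ≤ tbar g Dg y := by
  refine ofReal_le_of_forall_pos_of_lt fun s hs hst => ofReal_le_tbar_of_HLL_eq_singleton hs ?_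
  refine (HLL_eq_singleton_iff hg (self_mem_closedBall_charX hs.le)).2 fun z hz hzy => ?_
  have hzball := mem_ball_charX_of_mem_closedBall hy hst hzy hz
  have hle : g y ≤ g z := ((mem_HLL_iff hg).1 hL).2 (Metric.ball_subset_closedBall hzball)
  refine hle.lt_of_ne fun heq => hzball.ne (hsphere ?_)
  exact ⟨(mem_ball_iff_norm.1 hzball).le, heq ▸ hL.2⟩

lemma limsup_tsnd_le_tbar (hg : LowerSemicontinuous g) (hDg : ContinuousAt Dg y₀)
    (hy₀ : Dg y₀ ≠ 0) :
    limsup (fun y => tsnd g Dg y) (𝓝[{y | g y₀ < g y}] y₀) ≤ tbar g Dg y₀ := by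
  refine le_of_forall_lt_imp_le_of_dense fun a ha => ?_
  obtain ⟨s, -, has, hslim⟩ := ENNReal.lt_iff_exists_real_btwn.1 ha
  obtain ⟨T, -, hsT, hTlim⟩ := ENNReal.lt_iff_exists_real_btwn.1 hslim
  have hs : 0 < s := ENNReal.ofReal_pos.1 (pos_of_gt has)
  have hsT' : s < T := (ENNReal.ofReal_lt_ofReal_iff_of_nonneg hs.le).1 hsT
  refine has.le.trans (ofReal_le_tbar_of_HLL_eq_singleton hs ?_)
  refine (HLL_eq_singleton_iff hg (self_mem_closedBall_charX hs.le)).2 fun z hz hzy => ?_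
  have hball : ∀ᶠ y in 𝓝 y₀, z ∈ Metric.ball (charX Dg y T) T :=
    (continuousAt_const.dist (continuousAt_charX hDg hy₀ T)).eventually_lt_const
      (mem_ball_charX_of_mem_closedBall hy₀ hsT' hzy hz)
  have hfreq : ∃ᶠ y in 𝓝[{y | g y₀ < g y}] y₀, ENNReal.ofReal T < tsnd g Dg y :=
    frequently_lt_of_lt_limsup (h := hTlim)
  obtain ⟨y, hyT, hzy', hgy⟩ := (hfreq.and_eventually
    ((eventually_nhdsWithin_of_eventually_nhds hball).and self_mem_nhdsWithin)).exists
  have hmin := ((mem_HLL_iff hg).1 (mem_HLL_charX_of_lt_tsnd (hs.trans hsT') hyT)).2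
  exact hgy.trans_le (hmin (Metric.ball_subset_closedBall hzy'))

lemma frequently_ofReal_le_tbar (hg : LowerSemicontinuous g)
    (hgrad : ∀ᶠ y in 𝓝 y₀, HasGradientAt g (Dg y) y) (hDg : ContinuousAt Dg y₀) (hy₀ : Dg y₀ ≠ 0)
    (ht : 0 < t) (hL : HLL g (charX Dg y₀ t) t = {y₀}) (hst : s < t) :
    ∃ᶠ y in 𝓝[{y | g y₀ < g y}] y₀, ENNReal.ofReal s ≤ tbar g Dg y := by
  rw [frequently_nhdsWithin_iff, frequently_iff]
  intro U hU
  set c := charX Dg y₀ t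
  have hregular := hgrad.and (hDg.eventually_ne hy₀)
  obtain ⟨r, hrU, hsr, hr, hrt⟩ := ((eventually_HLL_subset_of_HLL_eq_singleton hg
    hgrad.self_of_nhds.continuousAt ht hL (inter_mem hU hregular)).and
      ((eventually_nhdsWithin_of_eventually_nhds (lt_mem_nhds hst)).and
        (Ioo_mem_nhdsLT ht))).exists
  have hcenter : ∀ z ∈ HLL g c r, c = charX Dg z r := fun z hz =>
    eq_charX_of_mem_HLL hg (hrU hz).2.1 (hrU hz).2.2 hz
  have hsphere : HLL g c r ⊆ Metric.sphere c r := fun z hz => by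
    rw [Metric.mem_sphere, hcenter z hz, dist_self_charX (hrU hz).2.2 hr.le]
  obtain ⟨y, hy⟩ := HLL_nonempty (x := c) hg hr.le
  refine ⟨y, (hrU hy).1, (ENNReal.ofReal_le_ofReal hsr.le).trans ?_, ?_⟩
  · refine ofReal_le_tbar_of_HLL_subset_sphere hg (hrU hy).2.2 ?_ ?_ <;> rwa [← hcenter y hy]
  · have hyc : dist y c = r := hsphere hy
    refine (HLL_eq_singleton_iff hg (self_mem_closedBall_charX ht.le)).1 hL y
      (Metric.mem_closedBall.2 (hyc.trans_le hrt.le)) fun h => hrt.ne ?_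
    rw [← hyc, h, dist_self_charX hy₀ ht.le]

lemma tbar_le_limsup_tbar (hg : LowerSemicontinuous g)
    (hgrad : ∀ᶠ y in 𝓝 y₀, HasGradientAt g (Dg y) y) (hDg : ContinuousAt Dg y₀)
    (hy₀ : Dg y₀ ≠ 0) :
    tbar g Dg y₀ ≤ limsup (fun y => tbar g Dg y) (𝓝[{y | g y₀ < g y}] y₀) := by
  refine sSup_le ?_
  rintro _ ⟨t, ⟨ht, hL⟩, rfl⟩
  exact ofReal_le_of_forall_pos_of_lt fun s _ hst =>
    le_limsup_of_frequently_le' (frequently_ofReal_le_tbar hg hgrad hDg hy₀ ht hL hst)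

theorem limsup_termination_times_on_Hplus_general (hg : LowerSemicontinuous g)
    (hgrad : ∀ᶠ y in 𝓝 y₀, HasGradientAt g (Dg y) y) (hDg : ContinuousAt Dg y₀)
    (hy₀ : Dg y₀ ≠ 0) :
    limsup (fun y => tbar g Dg y) (𝓝[{y | g y₀ < g y}] y₀) = tbar g Dg y₀ ∧
    limsup (fun y => tsnd g Dg y) (𝓝[{y | g y₀ < g y}] y₀) = tbar g Dg y₀ := by
  have hupper := limsup_tsnd_le_tbar hg hDg hy₀
  have hlower := tbar_le_limsup_tbar hg hgrad hDg hy₀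
  have hmono : limsup (fun y => tbar g Dg y) (𝓝[{y | g y₀ < g y}] y₀) ≤
      limsup (fun y => tsnd g Dg y) (𝓝[{y | g y₀ < g y}] y₀) :=
    limsup_le_limsup (.of_forall fun y => tbar_le_tsnd hg y)
  exact ⟨(hmono.trans hupper).antisymm hlower, hupper.antisymm (hlower.trans hmono)⟩

end HopfLax

theorem limsup_termination_times_on_Hplus {n : ℕ} (hn : 0 < n) (g : Euc n → ℝ) (Dg : Euc n → Euc n)
    (hg : ∀ y, HasGradientAt g (Dg y) y) (hDg : Continuous Dg)
    (y₀ : Euc n) (hy : Dg y₀ ≠ 0) :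
    Filter.limsup (fun y => tbar g Dg y) (𝓝[{y | g y₀ < g y}] y₀) = tbar g Dg y₀ ∧
    Filter.limsup (fun y => tsnd g Dg y) (𝓝[{y | g y₀ < g y}] y₀) = tbar g Dg y₀ := by
  have hcont : Continuous g := continuous_iff_continuousAt.2 fun y => (hg y).continuousAt
  exact limsup_termination_times_on_Hplus_general hcont.lowerSemicontinuous (.of_forall hg)
    hDg.continuousAt hy
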